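/- Let φ_{μ,σ}(x) = (1/(σ√(2π))) · exp(−(x − μ)²/(2σ²)) denote the normal density with mean μ and standard deviation σ, and let φ = φ_{0,1} be the standard normal density. Then for every μ with 0 ≤ μ < 1 and every real number a, ∫_{−|a|}^{|a|} (1 − x²) φ(x) dx ≥ ∫_{−|a|}^{|a|} (1 − x²) φ_{μ,√(1−μ²)}(x) dx. In words: the standard normal distribution (zero bias, unit variance) is ex post dominant within the class of normal distributions {N(μ, 1 − μ²) : 0 ≤ μ < 1} in the bias-variance game. -/

import Mathlib

/-- The density of the normal distribution with mean `μ` and standard deviation `σ`. -/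
noncomputable def normalPDF (μ σ x : ℝ) : ℝ :=
  (1 / (σ * Real.sqrt (2 * Real.pi))) * Real.exp (-(x - μ)^2 / (2 * σ^2))

/-!
Every distribution `N(μ, 1 - μ²)` has second moment `1`, so the payoff difference
`D b = ∫_{-b}^{b} (1 - x²) (φ₀ - φ_μ)` vanishes at `b = 0` and as `b → ∞`. Its derivative is
`(1 - b²)` times the difference of the densities of `|N(0, 1)|` and `|N(μ, 1 - μ²)|`. The logarithm
of the ratio of these densities is a concave function of `b²`, because `s ↦ log (cosh √s)` is
concave, so the set of `b ≥ 0` at which the biased folded density dominates is an interval `S`, and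
`1 ∈ S`. Inside `S` the function `D` is smallest at `b = 1`; to the left of `S` it increases from
`D 0 = 0`; to the right of `S` it decreases to its limit `0`. It remains to see that `D 1 ≥ 0`.
This and `1 ∈ S` are one-variable inequalities, both equalities at `μ = 0` and monotone in `μ`.
-/

open Real Set Filter Topology

section Calculus

lemma hasDerivAt_integral_symm {f : ℝ → ℝ} (hf : Continuous f) (b : ℝ) :
    HasDerivAt (fun b ↦ ∫ x in (-b)..b, f x) (f b + f (-b)) b := by
  have h_split (b : ℝ) : ∫ x in (-b)..b, f x = (∫ x in (0)..b, f x) - ∫ x in (0)..(-b), f x :=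
    (intervalIntegral.integral_interval_sub_left
      (hf.intervalIntegrable _ _) (hf.intervalIntegrable _ _)).symm
  have h_prim (c : ℝ) : HasDerivAt (fun b ↦ ∫ x in (0)..b, f x) (f c) c :=
    (hf.integral_hasStrictDerivAt 0 c).hasDerivAt
  have h_neg : HasDerivAt (fun b ↦ ∫ x in (0)..(-b), f x) (f (-b) * -1) b :=
    (h_prim (-b)).comp b (hasDerivAt_neg b)
  simp_rw [h_split]
  refine HasDerivAt.congr_deriv ((h_prim b).sub h_neg) ?_
  ring

theorem nonneg_of_mul_deriv_nonneg_of_ordConnected {f f' : ℝ → ℝ} {S : Set ℝ} {a c x : ℝ}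
    (hf : ∀ y, HasDerivAt f (f' y) y) (hS : S.OrdConnected) (hcS : c ∈ S)
    (h_mem : ∀ y ∈ S, 0 ≤ (y - c) * f' y) (h_notMem : ∀ y, a ≤ y → y ∉ S → (y - c) * f' y ≤ 0)
    (ha : 0 ≤ f a) (hc : 0 ≤ f c) (h_lim : Tendsto f atTop (𝓝 0)) (hax : a ≤ x) : 0 ≤ f x := by
  have h_mono {D : Set ℝ} (hD : Convex ℝ D) (h : ∀ y ∈ interior D, 0 ≤ f' y) : MonotoneOn f D :=
    monotoneOn_of_hasDerivWithinAt_nonneg hD (fun y _ ↦ (hf y).continuousAt.continuousWithinAt)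
      (fun y _ ↦ (hf y).hasDerivWithinAt) h
  have h_anti {D : Set ℝ} (hD : Convex ℝ D) (h : ∀ y ∈ interior D, f' y ≤ 0) : AntitoneOn f D :=
    antitoneOn_of_hasDerivWithinAt_nonpos hD (fun y _ ↦ (hf y).continuousAt.continuousWithinAt)
      (fun y _ ↦ (hf y).hasDerivWithinAt) h
  by_cases hxS : x ∈ S
  · refine hc.trans ?_
    rcases le_total x c with hxc | hcx
    · refine h_anti (convex_Icc x c) (fun y hy ↦ ?_) (left_mem_Icc.2 hxc) (right_mem_Icc.2 hxc) hxc
      rw [interior_Icc] at hy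
      exact nonpos_of_mul_nonneg_right (h_mem y (hS.out hxS hcS (Ioo_subset_Icc_self hy)))
        (sub_neg.2 hy.2)
    · refine h_mono (convex_Icc c x) (fun y hy ↦ ?_) (left_mem_Icc.2 hcx) (right_mem_Icc.2 hcx) hcx
      rw [interior_Icc] at hy
      exact nonneg_of_mul_nonneg_right (h_mem y (hS.out hcS hxS (Ioo_subset_Icc_self hy)))
        (sub_pos.2 hy.1)
  · rcases lt_or_gt_of_ne (show x ≠ c from fun h ↦ hxS (h ▸ hcS)) with hxc | hcx
    · refine ha.trans
        (h_mono (convex_Icc a x) (fun y hy ↦ ?_) (left_mem_Icc.2 hax) (right_mem_Icc.2 hax) hax)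
      rw [interior_Icc] at hy
      have hyS : y ∉ S := fun h ↦ hxS (hS.out h hcS ⟨hy.2.le, hxc.le⟩)
      exact nonneg_of_mul_nonpos_right (h_notMem y hy.1.le hyS) (sub_neg.2 (hy.2.trans hxc))
    · have h_tail : AntitoneOn f (Ici x) := by
        refine h_anti (convex_Ici x) fun y hy ↦ ?_
        rw [interior_Ici] at hy
        have hyS : y ∉ S := fun h ↦ hxS (hS.out hcS h ⟨hcx.le, le_of_lt hy⟩)
        exact nonpos_of_mul_nonpos_right (h_notMem y (hax.trans (le_of_lt hy)) hyS)
          (sub_pos.2 (hcx.trans hy))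
      refine le_of_tendsto h_lim ?_
      filter_upwards [eventually_ge_atTop x] with y hy using h_tail self_mem_Ici hy hy

end Calculus

section Hyperbolic

lemma self_le_sinh_mul_cosh {x : ℝ} (hx : 0 ≤ x) : x ≤ sinh x * cosh x :=
  (self_le_sinh_iff.2 hx).trans (le_mul_of_one_le_right (sinh_nonneg_iff.2 hx) (one_le_cosh x))

lemma sinh_le_self_mul_cosh {x : ℝ} (hx : 0 ≤ x) : sinh x ≤ x * cosh x := by
  have h_deriv (y : ℝ) : HasDerivAt (fun y ↦ y * cosh y - sinh y) (y * sinh y) y := by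
    refine HasDerivAt.congr_deriv
      (((hasDerivAt_id' y).mul (hasDerivAt_cosh y)).sub (hasDerivAt_sinh y)) ?_
    simp
  have h_mono : Monotone fun y ↦ y * cosh y - sinh y :=
    monotone_of_hasDerivAt_nonneg h_deriv fun y ↦ by
      rcases le_total 0 y with hy | hy
      · exact mul_nonneg hy (sinh_nonneg_iff.2 hy)
      · exact mul_nonneg_of_nonpos_of_nonpos hy (sinh_nonpos_iff.2 hy)
  simpa using h_mono hx

lemma cosh_add_mul_sinh_pos {m : ℝ} (hm : |m| ≤ 1) (x : ℝ) : 0 < cosh x + m * sinh x :=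
  (exp_pos (m * x)).trans_le (exp_mul_le_cosh_add_mul_sinh hm x)

lemma antitoneOn_tanh_div_self : AntitoneOn (fun u ↦ tanh u / u) (Ioi 0) := by
  have h_deriv {u : ℝ} (hu : u ∈ Ioi (0 : ℝ)) :
      HasDerivAt (fun u ↦ tanh u / u) ((u - sinh u * cosh u) / (u * cosh u) ^ 2) u := by
    have hu0 : u ≠ 0 := ne_of_gt hu
    have hcosh : cosh u ≠ 0 := (cosh_pos u).ne'
    simp_rw [tanh_eq_sinh_div_cosh]
    refine HasDerivAt.congr_deriv
      (((hasDerivAt_sinh u).div (hasDerivAt_cosh u) hcosh).div (hasDerivAt_id' u) hu0) ?_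
    simp only [Pi.div_apply]
    field_simp
    linear_combination u * cosh_sq u
  refine antitoneOn_of_hasDerivWithinAt_nonpos (convex_Ioi 0)
    (fun u hu ↦ (h_deriv hu).continuousAt.continuousWithinAt)
    (fun u hu ↦ (h_deriv (interior_subset hu)).hasDerivWithinAt) fun u hu ↦ ?_
  exact div_nonpos_of_nonpos_of_nonneg
    (sub_nonpos.2 (self_le_sinh_mul_cosh (le_of_lt (interior_subset hu)))) (sq_nonneg _)

theorem concaveOn_log_cosh_sqrt : ConcaveOn ℝ (Ici 0) fun s ↦ log (cosh √s) := by
  have h_deriv {s : ℝ} (hs : s ∈ Ioi (0 : ℝ)) :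
      HasDerivAt (fun s ↦ log (cosh √s)) (tanh √s / √s / 2) s := by
    refine HasDerivAt.congr_deriv (((hasDerivAt_sqrt (ne_of_gt hs)).cosh).log (cosh_pos _).ne') ?_
    rw [tanh_eq_sinh_div_cosh]
    field_simp
  refine AntitoneOn.concaveOn_of_deriv (convex_Ici 0) ?_ ?_ ?_
  · exact (Continuous.log (continuous_cosh.comp continuous_sqrt)
      fun s ↦ (cosh_pos √s).ne').continuousOn
  · rw [interior_Ici]
    exact fun s hs ↦ (h_deriv hs).differentiableAt.differentiableWithinAt
  · rw [interior_Ici]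
    intro s hs r hr hsr
    rw [(h_deriv hs).deriv, (h_deriv hr).deriv]
    gcongr ?_ / 2
    exact antitoneOn_tanh_div_self (sqrt_pos.2 hs) (sqrt_pos.2 hr) (sqrt_le_sqrt hsr)

theorem ordConnected_setOf_quadratic_le_log_cosh (A B k : ℝ) :
    OrdConnected {x : ℝ | 0 ≤ x ∧ A + B * x ^ 2 ≤ log (cosh (k * x))} := by
  have h_cosh (x : ℝ) : cosh (k * x) = cosh √(k ^ 2 * x ^ 2) := by
    rw [← mul_pow, sqrt_sq_eq_abs, cosh_abs]
  have h_conc : ConcaveOn ℝ (Ici 0) fun s ↦ log (cosh √(k ^ 2 * s)) :=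
    (concaveOn_log_cosh_sqrt.comp_linearMap (LinearMap.mulLeft ℝ (k ^ 2))).subset
      (fun _ hs ↦ mul_nonneg (sq_nonneg k) hs) (convex_Ici 0)
  have h_lin : ConvexOn ℝ (Ici 0) fun s : ℝ ↦ A + B * s :=
    (convexOn_const A (convex_Ici 0)).add ((LinearMap.mulLeft ℝ B).convexOn (convex_Ici 0))
  have h_super := ((h_conc.sub h_lin).convex_ge 0).ordConnected
  refine ⟨fun x hx z hz y hy ↦ ?_⟩
  have hy0 : 0 ≤ y := hx.1.trans hy.1
  have h_sq {v : ℝ} (hv : 0 ≤ v ∧ A + B * v ^ 2 ≤ log (cosh (k * v))) :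
      v ^ 2 ∈ {s ∈ Ici (0 : ℝ) | 0 ≤ log (cosh √(k ^ 2 * s)) - (A + B * s)} :=
    ⟨sq_nonneg v, by rw [← h_cosh]; exact sub_nonneg.2 hv.2⟩
  have hy_sq := h_super.out (h_sq hx) (h_sq hz)
    ⟨pow_le_pow_left₀ hx.1 hy.1 2, pow_le_pow_left₀ hy0 hy.2 2⟩
  exact ⟨hy0, by rw [h_cosh]; exact sub_nonneg.1 hy_sq.2⟩

end Hyperbolic

section OneSubSq

variable {m : ℝ}

lemma hasDerivAt_one_sub_sq : HasDerivAt (fun m : ℝ ↦ 1 - m ^ 2) (-(2 * m)) m := by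
  simpa using (hasDerivAt_pow 2 m).const_sub 1

lemma hasDerivAt_div_one_sub_sq (hm : 1 - m ^ 2 ≠ 0) :
    HasDerivAt (fun m : ℝ ↦ m / (1 - m ^ 2)) ((1 + m ^ 2) / (1 - m ^ 2) ^ 2) m := by
  refine HasDerivAt.congr_deriv ((hasDerivAt_id' m).div hasDerivAt_one_sub_sq hm) ?_
  ring

lemma hasDerivAt_sq_div_one_sub_sq (hm : 1 - m ^ 2 ≠ 0) :
    HasDerivAt (fun m : ℝ ↦ m ^ 2 / (1 - m ^ 2)) (2 * m / (1 - m ^ 2) ^ 2) m := by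
  refine HasDerivAt.congr_deriv ((hasDerivAt_pow 2 m).div hasDerivAt_one_sub_sq hm) ?_
  push_cast
  ring

lemma one_sub_sq_pos (hm : |m| < 1) : 0 < 1 - m ^ 2 :=
  sub_pos.2 ((sq_lt_one_iff_abs_lt_one m).2 hm)

lemma abs_lt_one_of_mem_Ico (hm : m ∈ Ico (0 : ℝ) 1) : |m| < 1 := by
  rw [abs_of_nonneg hm.1]
  exact hm.2

lemma mul_cosh_le_sinh_div_one_sub_sq (hm : m ∈ Ico (0 : ℝ) 1) :
    m * cosh (m / (1 - m ^ 2)) ≤ sinh (m / (1 - m ^ 2)) := by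
  have hw := one_sub_sq_pos (abs_lt_one_of_mem_Ico hm)
  set t := m / (1 - m ^ 2)
  have ht0 : 0 ≤ t := div_nonneg hm.1 hw.le
  have h_le : m ≤ sinh t * cosh t * (1 - m ^ 2) := (div_le_iff₀ hw).1 (self_le_sinh_mul_cosh ht0)
  have h_factor : 0 ≤ (sinh t - m * cosh t) * (cosh t + m * sinh t) := by
    have h_sq : cosh t ^ 2 - sinh t ^ 2 = 1 := cosh_sq_sub_sinh_sq t
    linear_combination h_le + m * h_sq
  exact sub_nonneg.1 (nonneg_of_mul_nonneg_left h_factor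
    (cosh_add_mul_sinh_pos (abs_lt_one_of_mem_Ico hm).le t))

theorem log_one_sub_sq_le_log_cosh (hm : m ∈ Ico (0 : ℝ) 1) :
    log (1 - m ^ 2) / 2 + m ^ 2 / (1 - m ^ 2) ≤ log (cosh (m / (1 - m ^ 2))) := by
  let F (m : ℝ) := log (cosh (m / (1 - m ^ 2))) - (log (1 - m ^ 2) / 2 + m ^ 2 / (1 - m ^ 2))
  let F' (m : ℝ) := (1 + m ^ 2) / (1 - m ^ 2) ^ 2 *
    ((sinh (m / (1 - m ^ 2)) - m * cosh (m / (1 - m ^ 2))) / cosh (m / (1 - m ^ 2)))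
  have h_deriv (m : ℝ) (hm : m ∈ Ico (0 : ℝ) 1) : HasDerivAt F (F' m) m := by
    have hw := (one_sub_sq_pos (abs_lt_one_of_mem_Ico hm)).ne'
    have hcosh := (cosh_pos (m / (1 - m ^ 2))).ne'
    refine HasDerivAt.congr_deriv (((hasDerivAt_div_one_sub_sq hw).cosh.log hcosh).sub
      (((hasDerivAt_one_sub_sq.log hw).div_const 2).add (hasDerivAt_sq_div_one_sub_sq hw))) ?_
    simp only [F']
    field_simp
    ring
  have h_mono : MonotoneOn F (Ico 0 1) :=
    monotoneOn_of_hasDerivWithinAt_nonneg (convex_Ico 0 1)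
      (fun m hm ↦ (h_deriv m hm).continuousAt.continuousWithinAt)
      (fun m hm ↦ (h_deriv m (interior_subset hm)).hasDerivWithinAt) fun m hm ↦
        mul_nonneg (by positivity) (div_nonneg
          (sub_nonneg.2 (mul_cosh_le_sinh_div_one_sub_sq (interior_subset hm))) (cosh_pos _).le)
  have h_zero : F 0 = 0 := by simp [F]
  exact sub_nonneg.1 (h_zero ▸ h_mono (left_mem_Ico.2 one_pos) hm hm.1)

theorem log_cosh_add_mul_sinh_le (hm : m ∈ Ico (0 : ℝ) 1) :
    log (1 - m ^ 2) / 2 + log (cosh (m / (1 - m ^ 2)) + m * sinh (m / (1 - m ^ 2))) ≤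
      m ^ 2 / (1 - m ^ 2) := by
  let G (m : ℝ) := cosh (m / (1 - m ^ 2)) + m * sinh (m / (1 - m ^ 2))
  let F (m : ℝ) := log (1 - m ^ 2) / 2 + log (G m) - m ^ 2 / (1 - m ^ 2)
  let F' (m : ℝ) := 2 * (sinh (m / (1 - m ^ 2)) -
    m / (1 - m ^ 2) * cosh (m / (1 - m ^ 2))) / G m
  have h_nonneg {m : ℝ} (hm : m ∈ Ico (0 : ℝ) 1) : 0 ≤ m / (1 - m ^ 2) :=
    div_nonneg hm.1 (one_sub_sq_pos (abs_lt_one_of_mem_Ico hm)).le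
  have h_pos {m : ℝ} (hm : m ∈ Ico (0 : ℝ) 1) : 0 < G m :=
    cosh_add_mul_sinh_pos (abs_lt_one_of_mem_Ico hm).le _
  have h_deriv (m : ℝ) (hm : m ∈ Ico (0 : ℝ) 1) : HasDerivAt F (F' m) m := by
    have hw := (one_sub_sq_pos (abs_lt_one_of_mem_Ico hm)).ne'
    have hG := (h_pos hm).ne'
    have ht := hasDerivAt_div_one_sub_sq hw
    refine HasDerivAt.congr_deriv ((((hasDerivAt_one_sub_sq.log hw).div_const 2).add
      ((ht.cosh.add ((hasDerivAt_id' m).mul ht.sinh)).log hG)).sub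
        (hasDerivAt_sq_div_one_sub_sq hw)) ?_
    simp only [F', G, Pi.add_apply, Pi.mul_apply] at hG ⊢
    field_simp
    ring
  have h_anti : AntitoneOn F (Ico 0 1) :=
    antitoneOn_of_hasDerivWithinAt_nonpos (convex_Ico 0 1)
      (fun m hm ↦ (h_deriv m hm).continuousAt.continuousWithinAt)
      (fun m hm ↦ (h_deriv m (interior_subset hm)).hasDerivWithinAt) fun m hm ↦
        div_nonpos_of_nonpos_of_nonneg
          (mul_nonpos_of_nonneg_of_nonpos zero_le_two
            (sub_nonpos.2 (sinh_le_self_mul_cosh (h_nonneg (interior_subset hm)))))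
          (h_pos (interior_subset hm)).le
  have h_zero : F 0 = 0 := by simp [F, G]
  exact sub_nonpos.1 (h_zero ▸ h_anti (left_mem_Ico.2 one_pos) hm hm.1)

end OneSubSq

section NormalPDF

variable {μ σ : ℝ}

lemma normalPDF_neg (x : ℝ) : normalPDF μ σ (-x) = normalPDF (-μ) σ x := by
  unfold normalPDF
  congr 3
  ring

@[fun_prop]
lemma continuous_normalPDF : Continuous (normalPDF μ σ) := by
  unfold normalPDF
  fun_prop

lemma hasDerivAt_normalPDF (x : ℝ) :
    HasDerivAt (normalPDF μ σ) (-(x - μ) / σ ^ 2 * normalPDF μ σ x) x := by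
  have h_exponent : HasDerivAt (fun x ↦ -(x - μ) ^ 2 / (2 * σ ^ 2)) (-(x - μ) / σ ^ 2) x := by
    refine HasDerivAt.congr_deriv
      (((((hasDerivAt_id' x).sub_const μ).pow 2).neg).div_const (2 * σ ^ 2)) ?_
    push_cast
    ring
  unfold normalPDF
  refine HasDerivAt.congr_deriv (h_exponent.exp.const_mul (1 / (σ * √(2 * π)))) ?_
  ring

lemma normalPDF_eq_mul_cosh_add_sinh (x : ℝ) :
    normalPDF μ σ x = 1 / (σ * √(2 * π)) * exp (-(x ^ 2 + μ ^ 2) / (2 * σ ^ 2)) *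
      (cosh (μ / σ ^ 2 * x) + sinh (μ / σ ^ 2 * x)) := by
  rw [normalPDF, cosh_add_sinh, mul_assoc, ← exp_add]
  ring_nf

theorem integral_sub_sq_mul_normalPDF (hσ : σ ≠ 0) (a b : ℝ) :
    ∫ x in a..b, (μ ^ 2 + σ ^ 2 - x ^ 2) * normalPDF μ σ x =
      σ ^ 2 * ((b + μ) * normalPDF μ σ b - (a + μ) * normalPDF μ σ a) := by
  have h_deriv (x : ℝ) : HasDerivAt (fun x ↦ σ ^ 2 * ((x + μ) * normalPDF μ σ x))
      ((μ ^ 2 + σ ^ 2 - x ^ 2) * normalPDF μ σ x) x := by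
    refine HasDerivAt.congr_deriv
      ((((hasDerivAt_id' x).add_const μ).mul (hasDerivAt_normalPDF x)).const_mul (σ ^ 2)) ?_
    field_simp
    ring
  rw [intervalIntegral.integral_eq_sub_of_hasDerivAt (fun x _ ↦ h_deriv x)
    (Continuous.intervalIntegrable (by fun_prop) _ _)]
  ring

lemma tendsto_add_mul_normalPDF_cocompact (hσ : σ ≠ 0) (c : ℝ) :
    Tendsto (fun x ↦ (x + c) * normalPDF μ σ x) (cocompact ℝ) (𝓝 0) := by
  have ha : 0 < 1 / (2 * σ ^ 2) := by positivity
  have h_const : Tendsto (fun y ↦ exp (-(1 / (2 * σ ^ 2)) * y ^ 2)) (cocompact ℝ) (𝓝 0) := by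
    simpa using tendsto_rpow_abs_mul_exp_neg_mul_sq_cocompact ha 0
  have h_lin : Tendsto (fun y ↦ y * exp (-(1 / (2 * σ ^ 2)) * y ^ 2)) (cocompact ℝ) (𝓝 0) := by
    rw [tendsto_zero_iff_abs_tendsto_zero]
    simpa [Function.comp_def, abs_mul] using tendsto_rpow_abs_mul_exp_neg_mul_sq_cocompact ha 1
  have h_shift : Tendsto (fun x : ℝ ↦ x - μ) (cocompact ℝ) (cocompact ℝ) :=
    (Homeomorph.subRight μ).isClosedEmbedding.tendsto_cocompact
  have h_sum := ((h_lin.add (h_const.const_mul (μ + c))).const_mul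
    (1 / (σ * √(2 * π)))).comp h_shift
  simp only [mul_zero, add_zero] at h_sum
  refine h_sum.congr fun x ↦ ?_
  have h_exponent : -(1 / (2 * σ ^ 2)) * (x - μ) ^ 2 = -(x - μ) ^ 2 / (2 * σ ^ 2) := by ring
  simp only [Function.comp_apply, normalPDF, h_exponent]
  ring

/-- The density of `|X|` on `[0, ∞)`, where `X` is normal with mean `μ` and standard deviation
`σ`. -/
noncomputable def foldedNormalPDF (μ σ x : ℝ) : ℝ :=
  normalPDF μ σ x + normalPDF μ σ (-x)

lemma foldedNormalPDF_eq_mul_cosh (x : ℝ) :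
    foldedNormalPDF μ σ x = 2 / (σ * √(2 * π)) * exp (-(x ^ 2 + μ ^ 2) / (2 * σ ^ 2)) *
      cosh (μ / σ ^ 2 * x) := by
  rw [foldedNormalPDF, normalPDF_eq_mul_cosh_add_sinh x, normalPDF_eq_mul_cosh_add_sinh (-x),
    mul_neg, cosh_neg, sinh_neg, neg_sq]
  ring

end NormalPDF

section ExPostPayoff

variable {μ : ℝ}

/-- The logarithm of the ratio at `x` between the densities of `|X|` for `X` distributed as
`N(μ, 1 - μ²)` and as `N(0, 1)`, arranged to show that it is a concave function of `x²`. -/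
noncomputable def logFoldedRatio (μ x : ℝ) : ℝ :=
  log (cosh (μ / (1 - μ ^ 2) * x)) -
    (log (1 - μ ^ 2) / 2 + μ ^ 2 / (2 * (1 - μ ^ 2)) + μ ^ 2 / (2 * (1 - μ ^ 2)) * x ^ 2)

lemma sqrt_eq_exp_log_div_two {w : ℝ} (hw : 0 < w) : √w = exp (log w / 2) := by
  rw [exp_half, exp_log hw]

theorem foldedNormalPDF_eq_mul_exp_logFoldedRatio (hμ : |μ| < 1) (x : ℝ) :
    foldedNormalPDF μ √(1 - μ ^ 2) x = foldedNormalPDF 0 1 x * exp (logFoldedRatio μ x) := by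
  have hw := one_sub_sq_pos hμ
  have h_exponent : -(x ^ 2 + μ ^ 2) / (2 * (1 - μ ^ 2)) = -x ^ 2 / 2 -
      (μ ^ 2 / (2 * (1 - μ ^ 2)) + μ ^ 2 / (2 * (1 - μ ^ 2)) * x ^ 2) := by
    field_simp
    ring
  rw [foldedNormalPDF_eq_mul_cosh, foldedNormalPDF_eq_mul_cosh, sq_sqrt hw.le, h_exponent,
    logFoldedRatio, exp_sub, exp_sub, exp_log (cosh_pos _), add_assoc, exp_add (log _ / 2),
    ← sqrt_eq_exp_log_div_two hw]
  simp only [Nat.ofNat_nonneg, sqrt_mul, one_mul, ne_eq, OfNat.ofNat_ne_zero, not_false_eq_true,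
    zero_pow, add_zero, one_pow, mul_one, div_one, zero_mul, cosh_zero]
  field_simp

theorem ordConnected_setOf_logFoldedRatio_nonneg (μ : ℝ) :
    OrdConnected {x : ℝ | 0 ≤ x ∧ 0 ≤ logFoldedRatio μ x} := by
  simpa only [logFoldedRatio, sub_nonneg] using ordConnected_setOf_quadratic_le_log_cosh _ _ _

lemma logFoldedRatio_one_nonneg (hμ : μ ∈ Ico (0 : ℝ) 1) : 0 ≤ logFoldedRatio μ 1 := by
  have h_halves : μ ^ 2 / (1 - μ ^ 2) =
      μ ^ 2 / (2 * (1 - μ ^ 2)) + μ ^ 2 / (2 * (1 - μ ^ 2)) := by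
    field_simp
    ring
  simpa only [logFoldedRatio, mul_one, one_pow, sub_nonneg, add_assoc, h_halves] using
    log_one_sub_sq_le_log_cosh hμ

/-- The ex post expected payoff, in the bias-variance game, of the strategy `N(μ, 1 - μ²)` against
an opponent whose realization has absolute value `b`. -/
noncomputable def exPostPayoff (μ b : ℝ) : ℝ :=
  ∫ x in (-b)..b, (1 - x ^ 2) * normalPDF μ √(1 - μ ^ 2) x

lemma exPostPayoff_zero_left (b : ℝ) :
    exPostPayoff 0 b = ∫ x in (-b)..b, (1 - x ^ 2) * normalPDF 0 1 x := by
  simp [exPostPayoff]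

lemma exPostPayoff_neg (μ b : ℝ) : exPostPayoff (-μ) b = exPostPayoff μ b := by
  have h_reflect := intervalIntegral.integral_comp_neg (a := -b) (b := b)
    fun x ↦ (1 - x ^ 2) * normalPDF μ √(1 - μ ^ 2) x
  simpa only [normalPDF_neg, neg_sq, neg_neg, exPostPayoff] using h_reflect

lemma exPostPayoff_abs (μ b : ℝ) : exPostPayoff |μ| b = exPostPayoff μ b := by
  rcases abs_choice μ with h | h <;> rw [h]
  exact exPostPayoff_neg μ b

lemma hasDerivAt_exPostPayoff (μ b : ℝ) :
    HasDerivAt (exPostPayoff μ) ((1 - b ^ 2) * foldedNormalPDF μ √(1 - μ ^ 2) b) b := by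
  refine HasDerivAt.congr_deriv (hasDerivAt_integral_symm
    (f := fun x ↦ (1 - x ^ 2) * normalPDF μ √(1 - μ ^ 2) x) (by fun_prop) b) ?_
  rw [foldedNormalPDF, neg_sq, mul_add]

theorem exPostPayoff_eq (hμ : |μ| < 1) (b : ℝ) :
    exPostPayoff μ b = (1 - μ ^ 2) * ((b + μ) * normalPDF μ √(1 - μ ^ 2) b -
      (-b + μ) * normalPDF μ √(1 - μ ^ 2) (-b)) := by
  have hw := one_sub_sq_pos hμ
  have h_integral := integral_sub_sq_mul_normalPDF (μ := μ) (sqrt_pos.2 hw).ne' (-b) b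
  rwa [sq_sqrt hw.le, add_sub_cancel] at h_integral

lemma tendsto_exPostPayoff_atTop (hμ : |μ| < 1) : Tendsto (exPostPayoff μ) atTop (𝓝 0) := by
  have h_tail := tendsto_add_mul_normalPDF_cocompact (μ := μ)
    (sqrt_pos.2 (one_sub_sq_pos hμ)).ne' μ
  have h_right := h_tail.mono_left atTop_le_cocompact
  have h_left := (h_tail.mono_left atBot_le_cocompact).comp tendsto_neg_atTop_atBot
  simpa [funext (exPostPayoff_eq hμ), Function.comp_def] using
    (h_right.sub h_left).const_mul (1 - μ ^ 2)

lemma exPostPayoff_one_eq (hμ : |μ| < 1) :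
    exPostPayoff μ 1 = 2 / √(2 * π) * exp (-1 / 2) * (√(1 - μ ^ 2) * exp (-(μ ^ 2 / (1 - μ ^ 2))) *
      (cosh (μ / (1 - μ ^ 2)) + μ * sinh (μ / (1 - μ ^ 2)))) := by
  have hw := one_sub_sq_pos hμ
  have h_sqrt : √(1 - μ ^ 2) ^ 2 = 1 - μ ^ 2 := sq_sqrt hw.le
  have h_exponent : -(1 ^ 2 + μ ^ 2) / (2 * (1 - μ ^ 2)) = -1 / 2 + -(μ ^ 2 / (1 - μ ^ 2)) := by
    field_simp
    ring
  rw [exPostPayoff_eq hμ, normalPDF_eq_mul_cosh_add_sinh 1, normalPDF_eq_mul_cosh_add_sinh (-1),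
    h_sqrt, mul_neg, mul_one, cosh_neg, sinh_neg, neg_sq, h_exponent, exp_add]
  field_simp
  rw [h_sqrt]
  ring

theorem exPostPayoff_one_le (hμ : μ ∈ Ico (0 : ℝ) 1) : exPostPayoff μ 1 ≤ exPostPayoff 0 1 := by
  have hμ_abs := abs_lt_one_of_mem_Ico hμ
  have hw := one_sub_sq_pos hμ_abs
  have h_pos := cosh_add_mul_sinh_pos hμ_abs.le (μ / (1 - μ ^ 2))
  have h_le_one : √(1 - μ ^ 2) * exp (-(μ ^ 2 / (1 - μ ^ 2))) *
      (cosh (μ / (1 - μ ^ 2)) + μ * sinh (μ / (1 - μ ^ 2))) ≤ 1 := by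
    rw [← exp_log h_pos, sqrt_eq_exp_log_div_two hw, ← exp_add, ← exp_add, exp_le_one_iff]
    linarith [log_cosh_add_mul_sinh_le hμ]
  rw [exPostPayoff_one_eq hμ_abs, exPostPayoff_one_eq (by simp)]
  refine mul_le_mul_of_nonneg_left (h_le_one.trans_eq ?_) (by positivity)
  simp

theorem exPostPayoff_le_exPostPayoff_zero {b : ℝ} (hμ : μ ∈ Ico (0 : ℝ) 1) (hb : 0 ≤ b) :
    exPostPayoff μ b ≤ exPostPayoff 0 b := by
  have hμ_abs := abs_lt_one_of_mem_Ico hμ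
  have h_deriv (y : ℝ) : HasDerivAt (exPostPayoff 0 - exPostPayoff μ)
      ((1 - y ^ 2) * (foldedNormalPDF 0 1 y * (1 - exp (logFoldedRatio μ y)))) y := by
    refine HasDerivAt.congr_deriv
      ((hasDerivAt_exPostPayoff 0 y).sub (hasDerivAt_exPostPayoff μ y)) ?_
    rw [foldedNormalPDF_eq_mul_exp_logFoldedRatio hμ_abs]
    simp only [ne_eq, OfNat.ofNat_ne_zero, not_false_eq_true, zero_pow, sub_zero, sqrt_one]
    ring
  have h_factor (y : ℝ) :
      (y - 1) * ((1 - y ^ 2) * (foldedNormalPDF 0 1 y * (1 - exp (logFoldedRatio μ y)))) =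
        (y - 1) ^ 2 * (1 + y) * foldedNormalPDF 0 1 y * (exp (logFoldedRatio μ y) - 1) := by
    ring
  have h_weight {y : ℝ} (hy : 0 ≤ y) : 0 ≤ (y - 1) ^ 2 * (1 + y) * foldedNormalPDF 0 1 y := by
    rw [foldedNormalPDF_eq_mul_cosh]
    positivity
  refine sub_nonneg.1 (nonneg_of_mul_deriv_nonneg_of_ordConnected
    (f := exPostPayoff 0 - exPostPayoff μ) (a := 0) (c := 1) h_deriv
    (ordConnected_setOf_logFoldedRatio_nonneg μ) ⟨zero_le_one, logFoldedRatio_one_nonneg hμ⟩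
    ?_ ?_ ?_ (sub_nonneg.2 (exPostPayoff_one_le hμ)) ?_ hb)
  · rintro y ⟨hy, hyL⟩
    rw [h_factor]
    exact mul_nonneg (h_weight hy) (sub_nonneg.2 (one_le_exp hyL))
  · intro y hy hyS
    rw [h_factor]
    have hyL : logFoldedRatio μ y ≤ 0 := le_of_not_ge fun h ↦ hyS ⟨hy, h⟩
    exact mul_nonpos_of_nonneg_of_nonpos (h_weight hy) (sub_nonpos.2 (exp_le_one_iff.2 hyL))
  · simp [exPostPayoff]
  · simpa using! (tendsto_exPostPayoff_atTop (by simp)).sub (tendsto_exPostPayoff_atTop hμ_abs)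

end ExPostPayoff

theorem std_normal_ex_post_dominant_general (μ : ℝ) (hμ : |μ| < 1) (a : ℝ) :
    ∫ x in (-|a|)..|a|, (1 - x ^ 2) * normalPDF 0 1 x
      ≥ ∫ x in (-|a|)..|a|, (1 - x ^ 2) * normalPDF μ √(1 - μ ^ 2) x := by
  rw [← exPostPayoff_zero_left, ← exPostPayoff, ← exPostPayoff_abs μ]
  exact exPostPayoff_le_exPostPayoff_zero ⟨abs_nonneg μ, hμ⟩ (abs_nonneg a)

theorem std_normal_ex_post_dominant (μ : ℝ) (hμ0 : 0 ≤ μ) (hμ1 : μ < 1) (a : ℝ) :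
    ∫ x in (-|a|)..|a|, (1 - x^2) * normalPDF 0 1 x
      ≥ ∫ x in (-|a|)..|a|, (1 - x^2) * normalPDF μ (Real.sqrt (1 - μ^2)) x :=
  std_normal_ex_post_dominant_general μ (by rwa [abs_of_nonneg hμ0]) a
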